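/- arXiv:2505.09635 — 2 statements merged into one kernel-verified Lean document; each statement's English description precedes it below -/
import Mathlib

section
/- Let a < b be integers with b − a > 2 and R = ℤ[x]/((x−a)(x−b)). The ideal class group Cl(R) is isomorphic to the quotient of (ℤ/(b−a))^× by the subgroup {1, −1}. In particular |Cl(R)| = φ(b−a)/2. -/
open Polynomial FractionalIdeal

/-- The subgroup of principal invertible fractional ideals of a commutative ring `R`,
inside the group of invertible fractional ideals of `R` in its total quotient ring. -/
noncomputable def principalUnits (R : Type*) [CommRing R] :
    Subgroup (FractionalIdeal (nonZeroDivisors R) (FractionRing R))ˣ where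
  carrier := {I | ∃ k : (FractionRing R)ˣ,
    (I : FractionalIdeal (nonZeroDivisors R) (FractionRing R)) =
      spanSingleton (nonZeroDivisors R) (k : FractionRing R)}
  mul_mem' := by
    rintro I J ⟨k, hk⟩ ⟨l, hl⟩
    exact ⟨k * l, by
      simp only [Units.val_mul, hk, hl, spanSingleton_mul_spanSingleton]⟩
  one_mem' := ⟨1, by simp [spanSingleton_one]⟩
  inv_mem' := by
    rintro I ⟨k, hk⟩
    refine ⟨k⁻¹, ?_⟩
    have h1 : (I : FractionalIdeal (nonZeroDivisors R) (FractionRing R)) * ↑I⁻¹ = 1 := by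
      rw [← Units.val_mul, mul_inv_cancel, Units.val_one]
    rw [hk] at h1
    have h2 : spanSingleton (nonZeroDivisors R) ((k⁻¹ : (FractionRing R)ˣ) : FractionRing R) *
        (spanSingleton (nonZeroDivisors R) (k : FractionRing R) * ↑I⁻¹) =
        spanSingleton (nonZeroDivisors R) ((k⁻¹ : (FractionRing R)ˣ) : FractionRing R) * 1 := by
      rw [h1]
    rwa [← mul_assoc, spanSingleton_mul_spanSingleton, Units.inv_mul, spanSingleton_one,
      one_mul, mul_one] at h2

/-- The ideal class group of a commutative ring `R`: invertible fractional ideals of `R`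
in its total quotient ring, modulo the principal ones. -/
noncomputable def classGroupOf (R : Type*) [CommRing R] :=
  (FractionalIdeal (nonZeroDivisors R) (FractionRing R))ˣ ⧸ principalUnits R

noncomputable instance (R : Type*) [CommRing R] : CommGroup (classGroupOf R) :=
  QuotientGroup.Quotient.commGroup (principalUnits R)

open nonZeroDivisors

section IntPair

variable {R : Type*} [CommRing R] {n : ℕ} {α β : R →+* ℤ}

/-- The pair `(α, β)` identifies `R` with the ring of pairs of integers that are congruent
modulo `n`. -/
structure IsCongruentPairs (n : ℕ) (α β : R →+* ℤ) : Prop where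
  eq_zero : ∀ r, α r = 0 → β r = 0 → r = 0
  dvd_sub : ∀ r, (n : ℤ) ∣ α r - β r
  exists_of_dvd : ∀ x y : ℤ, (n : ℤ) ∣ x - y → ∃ r, α r = x ∧ β r = y

namespace IsCongruentPairs

lemma intCast_eq (h : IsCongruentPairs n α β) (r : R) : (α r : ZMod n) = β r :=
  ((ZMod.intCast_eq_intCast_iff_dvd_sub _ _ _).2 (h.dvd_sub r)).symm

lemma exists_of_intCast_eq (h : IsCongruentPairs n α β) {x y : ℤ} (hxy : (x : ZMod n) = y) :
    ∃ r, α r = x ∧ β r = y :=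
  h.exists_of_dvd x y ((ZMod.intCast_eq_intCast_iff_dvd_sub _ _ _).1 hxy.symm)

lemma left_ne_zero [NeZero n] (h : IsCongruentPairs n α β) {r : R} (hr : r ∈ R⁰) : α r ≠ 0 := by
  intro h0
  obtain ⟨s, hs, hs'⟩ := h.exists_of_dvd n 0 (by simp)
  have : s = 0 := (mem_nonZeroDivisors_iff.1 hr).1 s (h.eq_zero _ (by simp [h0]) (by simp [hs']))
  simp [this, eq_comm, NeZero.ne n] at hs

lemma right_ne_zero [NeZero n] (h : IsCongruentPairs n α β) {r : R} (hr : r ∈ R⁰) : β r ≠ 0 := by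
  intro h0
  obtain ⟨s, hs, hs'⟩ := h.exists_of_dvd 0 n (by simp)
  have : s = 0 := (mem_nonZeroDivisors_iff.1 hr).1 s (h.eq_zero _ (by simp [hs]) (by simp [h0]))
  simp [this, eq_comm, NeZero.ne n] at hs'

lemma mem_nonZeroDivisors (h : IsCongruentPairs n α β) {r : R} (h1 : α r ≠ 0) (h2 : β r ≠ 0) :
    r ∈ R⁰ := by
  rw [mem_nonZeroDivisors_iff_right]
  intro s hs
  have e1 := congrArg α hs
  have e2 := congrArg β hs
  simp only [map_mul, map_zero, mul_eq_zero, h1, h2, or_false] at e1 e2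
  exact h.eq_zero s e1 e2

/-- The total quotient ring of the ring of congruent pairs of integers is `ℚ × ℚ`. -/
lemma exists_ringEquiv [NeZero n] (h : IsCongruentPairs n α β) (K : Type*) [CommRing K]
    [Algebra R K] [IsFractionRing R K] :
    ∃ e : K ≃+* ℚ × ℚ, ∀ r, e (algebraMap R K r) = ((α r : ℚ), (β r : ℚ)) := by
  let _ : Algebra R (ℚ × ℚ) :=
    RingHom.toAlgebra (((Int.castRingHom ℚ).comp α).prod ((Int.castRingHom ℚ).comp β))
  have hmap : ∀ r, algebraMap R (ℚ × ℚ) r = ((α r : ℚ), (β r : ℚ)) := fun r => rfl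
  have : IsFractionRing R (ℚ × ℚ) :=
    { map_units := fun r => by
        rw [hmap, Prod.isUnit_iff]
        simp [h.left_ne_zero r.2, h.right_ne_zero r.2]
      surj := by
        rintro ⟨x, y⟩
        obtain ⟨d, hd, hd'⟩ := h.exists_of_dvd (n * x.den * y.den) (n * x.den * y.den) (by simp)
        obtain ⟨r, hr, hr'⟩ := h.exists_of_dvd (n * x.num * y.den) (n * x.den * y.num)
          ⟨x.num * y.den - x.den * y.num, by ring⟩
        have hn : (n : ℤ) * x.den * y.den ≠ 0 := by simp [NeZero.ne n]
        refine ⟨(r, ⟨d, h.mem_nonZeroDivisors (hd ▸ hn) (hd' ▸ hn)⟩), ?_⟩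
        have hx := Rat.mul_den_eq_num x
        have hy := Rat.mul_den_eq_num y
        simp only [hmap, hd, hd', hr, hr', Prod.mk_mul_mk]
        push_cast
        rw [← hx, ← hy]
        ext <;> ring
      exists_of_eq := fun {r s} hrs => by
        simp only [hmap, Prod.mk.injEq, Int.cast_inj] at hrs
        have hz : r - s = 0 := h.eq_zero (r - s) (by simp [hrs.1]) (by simp [hrs.2])
        exact ⟨1, by rw [sub_eq_zero.1 hz]⟩ }
  exact ⟨(IsLocalization.algEquiv R⁰ K (ℚ × ℚ)).toRingEquiv, fun r =>
    (IsLocalization.algEquiv R⁰ K (ℚ × ℚ)).commutes r⟩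

variable {K : Type*} [CommRing K] [Algebra R K] {e : K ≃+* ℚ × ℚ}

/-- The lattice of pairs of integers `(x, y)` with `x ≡ u y` modulo `n`. -/
def twist (h : IsCongruentPairs n α β)
    (he : ∀ r, e (algebraMap R K r) = ((α r : ℚ), (β r : ℚ))) (u : (ZMod n)ˣ) :
    Submodule R K where
  carrier := {k | ∃ x y : ℤ, e k = ((x : ℚ), (y : ℚ)) ∧ (x : ZMod n) = u * y}
  zero_mem' := ⟨0, 0, by simp [Prod.zero_eq_mk]⟩
  add_mem' := by
    rintro k l ⟨x, y, hk, hxy⟩ ⟨z, w, hl, hzw⟩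
    exact ⟨x + z, y + w, by simp [hk, hl], by push_cast; rw [hxy, hzw]; ring⟩
  smul_mem' := by
    rintro r k ⟨x, y, hk, hxy⟩
    refine ⟨α r * x, β r * y, by simp [Algebra.smul_def, he, hk], ?_⟩
    push_cast
    rw [hxy, h.intCast_eq r]
    ring

variable (h : IsCongruentPairs n α β) (he : ∀ r, e (algebraMap R K r) = ((α r : ℚ), (β r : ℚ)))

include h he

omit h in
lemma smul_eq (r : R) {k : K} {x y : ℚ} (hk : e k = (x, y)) :
    e (r • k) = (α r * x, β r * y) := by
  simp [Algebra.smul_def, he, hk]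

lemma mem_one_iff {k : K} :
    k ∈ (1 : Submodule R K) ↔ ∃ x y : ℤ, e k = ((x : ℚ), (y : ℚ)) ∧ (x : ZMod n) = y := by
  rw [Submodule.mem_one]
  constructor
  · rintro ⟨r, rfl⟩
    exact ⟨α r, β r, he r, h.intCast_eq r⟩
  · rintro ⟨x, y, hk, hxy⟩
    obtain ⟨r, rfl, rfl⟩ := h.exists_of_intCast_eq hxy
    exact ⟨r, e.injective (by rw [he, hk])⟩

lemma twist_one : twist h he 1 = 1 := by
  ext k
  rw [mem_one_iff h he]
  simp [twist]

/-- A submodule containing `(s, 1)` and `(1, m)`, with `s` congruent to `u` modulo `n`, contains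
`twist u`. -/
lemma twist_le {u : (ZMod n)ˣ} {N : Submodule R K} {s : ℤ} {m : ℚ} (hs : (s : ZMod n) = u)
    (h1 : e.symm ((s : ℚ), 1) ∈ N) (h2 : e.symm (1, m) ∈ N) : twist h he u ≤ N := by
  rintro k ⟨x, y, hk, hxy⟩
  obtain ⟨r, hr, hr'⟩ := h.exists_of_dvd y y (by simp)
  obtain ⟨t, ht, ht'⟩ := h.exists_of_intCast_eq (x := x - s * y) (y := 0)
    (by push_cast; rw [hxy, hs, sub_self])
  have : k = r • e.symm ((s : ℚ), 1) + t • e.symm (1, m) := by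
    apply e.injective
    rw [map_add, smul_eq he r (e.apply_symm_apply _), smul_eq he t (e.apply_symm_apply _),
      hk, hr, hr', ht, ht']
    ext
    · simp; ring
    · simp
  rw [this]
  exact N.add_mem (N.smul_mem _ h1) (N.smul_mem _ h2)

lemma symm_mem_twist {u : (ZMod n)ˣ} {x y : ℤ} (hxy : (x : ZMod n) = u * y) :
    e.symm ((x : ℚ), (y : ℚ)) ∈ twist h he u :=
  ⟨x, y, e.apply_symm_apply _, hxy⟩

lemma twist_mul (u v : (ZMod n)ˣ) : twist h he (u * v) = twist h he u * twist h he v := by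
  obtain ⟨s, hs⟩ := ZMod.intCast_surjective (u : ZMod n)
  obtain ⟨t, ht⟩ := ZMod.intCast_surjective (v : ZMod n)
  obtain ⟨s', hs'⟩ := ZMod.intCast_surjective ((u⁻¹ : (ZMod n)ˣ) : ZMod n)
  obtain ⟨t', ht'⟩ := ZMod.intCast_surjective ((v⁻¹ : (ZMod n)ˣ) : ZMod n)
  apply le_antisymm
  · refine twist_le h he (s := s * t) (m := s' * t') (by simp [hs, ht]) ?_ ?_
    · have := Submodule.mul_mem_mul (symm_mem_twist h he (u := u) (x := s) (y := 1) (by simp [hs]))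
        (symm_mem_twist h he (u := v) (x := t) (y := 1) (by simp [ht]))
      rw [← map_mul] at this
      simpa using this
    · have := Submodule.mul_mem_mul
        (symm_mem_twist h he (u := u) (x := 1) (y := s') (by simp [hs']))
        (symm_mem_twist h he (u := v) (x := 1) (y := t') (by simp [ht']))
      rw [← map_mul] at this
      simpa using this
  · rw [Submodule.mul_le]
    rintro k ⟨x, y, hk, hxy⟩ l ⟨z, w, hl, hzw⟩
    refine ⟨x * z, y * w, by simp [hk, hl], ?_⟩
    push_cast
    rw [hxy, hzw]
    ring

/-- An invertible submodule of pairs of integers which projects onto both coordinates is a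
`twist`. -/
lemma exists_eq_twist {I J : Submodule R K} (hIJ : I * J = 1)
    (hI : ∀ i ∈ I, ∃ x y : ℤ, e i = ((x : ℚ), (y : ℚ)))
    (h1 : ∃ i ∈ I, (e i).1 = 1) (h2 : ∃ i ∈ I, (e i).2 = 1) : ∃ u, I = twist h he u := by
  obtain ⟨i₁, hi₁, hi₁'⟩ := h1
  obtain ⟨i₂, hi₂, hi₂'⟩ := h2
  obtain ⟨s, y, hsy⟩ := hI i₂ hi₂
  obtain rfl : y = 1 := by simpa [hsy] using hi₂'
  have hJ : ∀ z ∈ I * J, ∃ j ∈ J, (e j).2 = (e z).2 := by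
    intro z hz
    induction hz using Submodule.mul_induction_on' with
    | mem_mul_mem i hi j hj =>
      obtain ⟨x, y, hxy⟩ := hI i hi
      obtain ⟨r, hr, hr'⟩ := h.exists_of_dvd y y (by simp)
      exact ⟨r • j, J.smul_mem r hj, by simp [Algebra.smul_def, he, hxy, hr']⟩
    | add z _ w _ hz hw =>
      obtain ⟨j, hj, hjz⟩ := hz
      obtain ⟨l, hl, hlw⟩ := hw
      exact ⟨j + l, J.add_mem hj hl, by simp [hjz, hlw]⟩
  obtain ⟨j, hj, hj'⟩ := hJ 1 (hIJ ▸ Submodule.one_le.1 le_rfl)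
  have key : ∀ i ∈ I, ∃ x y : ℤ, e (i * j) = ((x : ℚ), (y : ℚ)) ∧ (x : ZMod n) = y :=
    fun i hi => (mem_one_iff h he).1 (hIJ ▸ Submodule.mul_mem_mul hi hj)
  obtain ⟨t, _, ht, -⟩ := key i₁ hi₁
  have hj₁ : (e j).1 = t := by simpa [hi₁'] using congrArg Prod.fst ht
  have hj₂ : (e j).2 = 1 := by simpa using hj'
  have key' : ∀ i ∈ I, ∀ x y : ℤ, e i = ((x : ℚ), (y : ℚ)) → (x * t : ZMod n) = y := by
    intro i hi x y hxy
    obtain ⟨z, w, hzw, hzw'⟩ := key i hi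
    have e1 := congrArg Prod.fst hzw
    have e2 := congrArg Prod.snd hzw
    simp only [map_mul, Prod.fst_mul, Prod.snd_mul, hxy, hj₁, hj₂, mul_one] at e1 e2
    norm_cast at e1 e2
    subst e2
    rw [← hzw', ← e1]
    push_cast
    rfl
  have hst : (s * t : ZMod n) = 1 := by simpa using key' i₂ hi₂ s 1 hsy
  refine ⟨⟨s, t, hst, by rw [mul_comm, hst]⟩, le_antisymm ?_ ?_⟩
  · intro i hi
    obtain ⟨x, y, hxy⟩ := hI i hi
    refine ⟨x, y, hxy, ?_⟩
    rw [← key' i hi x y hxy, Units.val_mk]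
    linear_combination (-(x : ZMod n)) * hst
  · refine twist_le h he (s := s) (m := (e i₁).2) rfl ?_ ?_
    · rwa [← Int.cast_one, ← hsy, e.symm_apply_apply]
    · rwa [← hi₁', Prod.mk.eta, e.symm_apply_apply]

lemma eq_one_or_eq_neg_one_of_twist_eq_span {u : (ZMod n)ˣ} {k : K}
    (hk : twist h he u = Submodule.span R {k}) : u = 1 ∨ u = -1 := by
  obtain ⟨x, y, hxy, hu⟩ : k ∈ twist h he u := hk ▸ Submodule.mem_span_singleton_self k
  obtain ⟨s, hs⟩ := ZMod.intCast_surjective (u : ZMod n)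
  obtain ⟨s', hs'⟩ := ZMod.intCast_surjective ((u⁻¹ : (ZMod n)ˣ) : ZMod n)
  have m1 := symm_mem_twist h he (u := u) (x := s) (y := 1) (by simp [hs])
  have m2 := symm_mem_twist h he (u := u) (x := 1) (y := s') (by simp [hs'])
  rw [hk, Submodule.mem_span_singleton] at m1 m2
  obtain ⟨r, hr⟩ := m1
  obtain ⟨t, ht⟩ := m2
  rw [e.eq_symm_apply, smul_eq he _ hxy, Prod.mk.injEq] at hr ht
  have hy : IsUnit y := IsUnit.of_mul_eq_one_right (β r) (by exact_mod_cast hr.2)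
  have hx : IsUnit x := IsUnit.of_mul_eq_one_right (α t) (by exact_mod_cast ht.1)
  rw [Units.ext_iff, Units.ext_iff]
  rcases Int.isUnit_iff.1 hx with rfl | rfl <;> rcases Int.isUnit_iff.1 hy with rfl | rfl <;>
    simp only [Int.cast_neg, Int.cast_one, mul_one, mul_neg, Units.val_one, Units.val_neg] at hu ⊢ <;>
    grind

lemma twist_neg_one : twist h he (-1) = Submodule.span R {e.symm (1, -1)} := by
  ext k
  rw [Submodule.mem_span_singleton]
  constructor
  · rintro ⟨x, y, hk, hxy⟩
    obtain ⟨r, hr, hr'⟩ := h.exists_of_intCast_eq (x := x) (y := -y) (by simpa using hxy)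
    refine ⟨r, e.injective ?_⟩
    rw [smul_eq he r (e.apply_symm_apply _), hk, hr, hr']
    simp
  · rintro ⟨r, rfl⟩
    refine Submodule.smul_mem _ r ⟨1, -1, by simp, by simp⟩

variable [IsFractionRing R K]

/-- `twist` as a homomorphism to the invertible fractional ideals. -/
noncomputable def twistHom : (ZMod n)ˣ →* (FractionalIdeal R⁰ K)ˣ :=
  (unitsMulEquivSubmodule (S := R⁰)).symm.toMonoidHom.comp <| MonoidHom.toHomUnits
    { toFun := twist h he
      map_one' := twist_one h he
      map_mul' := twist_mul h he }

lemma coe_twistHom (u : (ZMod n)ˣ) : ((twistHom h he u : FractionalIdeal R⁰ K) : Submodule R K) =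
    twist h he u := rfl

open scoped Pointwise in
omit h he [IsFractionRing R K] in
/-- The image of an invertible fractional ideal in a factor `ℚ` of the total quotient ring is
generated, as a lattice, by one nonzero element. -/
lemma exists_generator {ε : K →+* ℚ} {γ : R →+* ℤ} (hγ : Function.Surjective γ)
    (hε : ∀ r, ε (algebraMap R K r) = γ r) (hne : ∀ r ∈ R⁰, γ r ≠ 0)
    (I : (FractionalIdeal R⁰ K)ˣ) :
    ∃ g : ℚ, g ≠ 0 ∧ (∀ i ∈ (I : FractionalIdeal R⁰ K), ∃ x : ℤ, ε i = g * x) ∧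
      ∃ i ∈ (I : FractionalIdeal R⁰ K), ε i = g := by
  set I₀ : FractionalIdeal R⁰ K := I.val
  have hnum := den_mul_self_eq_num I₀
  obtain ⟨g, hg⟩ := (IsPrincipalIdealRing.principal (I₀.num.map γ)).principal
  have hd : (γ I₀.den : ℚ) ≠ 0 := by exact_mod_cast hne _ I₀.den.2
  have hI : ∀ i ∈ I₀, ∃ x : ℤ, ε i = g / γ I₀.den * x := by
    intro i hi
    have : I₀.den • i ∈ I₀.den • (I₀ : Submodule R K) :=
      Submodule.smul_mem_pointwise_smul _ _ _ hi
    rw [hnum] at this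
    obtain ⟨r, hr, hri⟩ := this
    have hr' := Ideal.mem_map_of_mem γ hr
    rw [hg, Submodule.mem_span_singleton] at hr'
    obtain ⟨x, hx⟩ := hr'
    have h1 := congrArg ε hri
    rw [Algebra.linearMap_apply, hε, Submonoid.smul_def, Algebra.smul_def, map_mul, hε, ← hx] at h1
    refine ⟨x, ?_⟩
    field_simp
    push_cast [smul_eq_mul] at h1
    linarith
  refine ⟨g / γ I₀.den, ?_, hI, ?_⟩
  · intro h0
    have hz : ∀ z ∈ (I₀ : Submodule R K) * ((I⁻¹ : (FractionalIdeal R⁰ K)ˣ) : FractionalIdeal R⁰ K),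
        ε z = 0 := by
      intro z hz
      induction hz using Submodule.mul_induction_on' with
      | mem_mul_mem i hi j _ =>
        obtain ⟨x, hx⟩ := hI i hi
        rw [map_mul, hx, h0, zero_mul, zero_mul]
      | add z _ w _ hz hw => rw [map_add, hz, hw, add_zero]
    rw [← FractionalIdeal.coe_mul, Units.mul_inv, FractionalIdeal.coe_one] at hz
    simpa using hz 1 (Submodule.one_le.1 le_rfl)
  · have : g ∈ I₀.num.map γ := hg ▸ Submodule.mem_span_singleton_self g
    rw [Ideal.mem_map_iff_of_surjective γ hγ] at this
    obtain ⟨r, hr, hrg⟩ := this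
    have hr' : algebraMap R K r ∈ I₀.den • (I₀ : Submodule R K) := by
      rw [hnum]
      exact ⟨r, hr, rfl⟩
    obtain ⟨i, hi, hir⟩ := hr'
    refine ⟨i, hi, ?_⟩
    have h1 : ε (algebraMap R K I₀.den * i) = ε (algebraMap R K r) := by
      rw [← hir, ← Algebra.smul_def]
      rfl
    rw [map_mul, hε, hε, hrg] at h1
    field_simp
    linarith

/-- Every invertible fractional ideal is a multiple of a `twist`. -/
lemma exists_eq_spanSingleton_mul_twistHom [NeZero n] (I : (FractionalIdeal R⁰ K)ˣ) :
    ∃ (k : Kˣ) (u : (ZMod n)ˣ), (I : FractionalIdeal R⁰ K) =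
      spanSingleton R⁰ (k : K) * (twistHom h he u : FractionalIdeal R⁰ K) := by
  obtain ⟨g, hg, hgI, i, hi, hig⟩ := exists_generator (ε := (RingHom.fst ℚ ℚ).comp e)
    (γ := α) (fun x => (h.exists_of_dvd x x (by simp)).imp fun _ hr => hr.1)
    (fun r => by simp [he]) (fun _ hr => h.left_ne_zero hr) I
  obtain ⟨f, hf, hfI, j, hj, hjf⟩ := exists_generator (ε := (RingHom.snd ℚ ℚ).comp e)
    (γ := β) (fun x => (h.exists_of_dvd x x (by simp)).imp fun _ hr => hr.2)
    (fun r => by simp [he]) (fun _ hr => h.right_ne_zero hr) I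
  simp only [RingHom.comp_apply, RingHom.coe_fst, RingHom.coe_snd, RingHom.coe_coe] at hgI hig hfI hjf
  have hmul : ∀ {x y z w : ℚ}, e.symm (x, y) * e.symm (z, w) = e.symm (x * z, y * w) := by
    intros
    rw [← map_mul, Prod.mk_mul_mk]
  have hone : e.symm (1, 1) = 1 := map_one e.symm
  let k : Kˣ := ⟨e.symm (g, f), e.symm (g⁻¹, f⁻¹), by simp [hmul, hg, hf, hone],
    by simp [hmul, hg, hf, hone]⟩
  have hk : e (k⁻¹ : Kˣ) = (g⁻¹, f⁻¹) := e.apply_symm_apply _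
  let N : FractionalIdeal R⁰ K := spanSingleton R⁰ ((k⁻¹ : Kˣ) : K) * I
  let M : FractionalIdeal R⁰ K :=
    spanSingleton R⁰ (k : K) * (I⁻¹ : (FractionalIdeal R⁰ K)ˣ)
  have hNM : N * M = 1 := by
    rw [mul_mul_mul_comm, spanSingleton_mul_spanSingleton]
    simp
  have hN : ∀ {z}, z ∈ N ↔ ∃ i ∈ (I : FractionalIdeal R⁰ K), z = (k⁻¹ : Kˣ) * i :=
    mem_singleton_mul
  obtain ⟨u, hu⟩ := exists_eq_twist h he (I := N) (J := M) (by rw [← FractionalIdeal.coe_mul, hNM, FractionalIdeal.coe_one])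
    (by
      intro z hz
      obtain ⟨i, hi, rfl⟩ := hN.1 hz
      obtain ⟨x, hx⟩ := hgI i hi
      obtain ⟨y, hy⟩ := hfI i hi
      exact ⟨x, y, by ext <;> simp [hk, hx, hy, hg, hf]⟩)
    ⟨_, hN.2 ⟨i, hi, rfl⟩, by simp [hk, hig, hg]⟩ ⟨_, hN.2 ⟨j, hj, rfl⟩, by simp [hk, hjf, hf]⟩
  refine ⟨k, u, ?_⟩
  have : (twistHom h he u : FractionalIdeal R⁰ K) = N := coeToSubmodule_injective hu.symm
  rw [this, ← mul_assoc, spanSingleton_mul_spanSingleton]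
  simp

end IsCongruentPairs

open IsCongruentPairs in
/-- The class group of the ring of congruent pairs of integers. -/
theorem IsCongruentPairs.nonempty_mulEquiv [NeZero n] (h : IsCongruentPairs n α β) :
    Nonempty (classGroupOf R ≃* (ZMod n)ˣ ⧸ Subgroup.zpowers (-1 : (ZMod n)ˣ)) := by
  obtain ⟨e, he⟩ := h.exists_ringEquiv (FractionRing R)
  let f : (ZMod n)ˣ →* (FractionalIdeal R⁰ (FractionRing R))ˣ ⧸ principalUnits R :=
    (QuotientGroup.mk' (principalUnits R)).comp (twistHom h he)
  have hmem : ∀ {u}, u ∈ f.ker ↔ twistHom h he u ∈ principalUnits R := fun {u} =>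
    (QuotientGroup.eq_one_iff _)
  have hker : f.ker = Subgroup.zpowers (-1) := by
    apply le_antisymm
    · intro u hu
      obtain ⟨k, hk⟩ := hmem.1 hu
      have := congrArg (fun I : FractionalIdeal R⁰ (FractionRing R) => (I : Submodule R (FractionRing R))) hk
      simp only [coe_twistHom, coe_spanSingleton] at this
      rcases eq_one_or_eq_neg_one_of_twist_eq_span h he this with rfl | rfl
      · exact one_mem _
      · exact Subgroup.mem_zpowers _
    · rw [Subgroup.zpowers_le, hmem]
      have hinv : e.symm (1, -1) * e.symm (1, -1) = 1 := by
        rw [← map_mul, ← map_one e.symm]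
        simp
      refine ⟨⟨e.symm (1, -1), e.symm (1, -1), hinv, hinv⟩, coeToSubmodule_injective ?_⟩
      simp only [coe_twistHom, coe_spanSingleton, twist_neg_one]
  have hsurj : Function.Surjective f := by
    intro c
    obtain ⟨I, rfl⟩ := QuotientGroup.mk_surjective c
    obtain ⟨k, u, hI⟩ := exists_eq_spanSingleton_mul_twistHom h he I
    refine ⟨u, QuotientGroup.eq.2 ⟨k, ?_⟩⟩
    rw [Units.val_mul, hI, mul_left_comm, Units.inv_mul, mul_one]
  exact ⟨((QuotientGroup.quotientMulEquivOfEq hker).symm.trans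
    (QuotientGroup.quotientKerEquivOfSurjective f hsurj)).symm⟩

end IntPair

/-- Evaluation at `a` on `ℤ[X]` modulo a multiple of `X - a`. -/
noncomputable def quotientEval {p : ℤ[X]} {a : ℤ} (hp : p.eval a = 0) :
    ℤ[X] ⧸ Ideal.span {p} →+* ℤ :=
  Ideal.Quotient.lift _ (evalRingHom a) fun q hq => by
    obtain ⟨r, rfl⟩ := Ideal.mem_span_singleton.1 hq
    simp [hp]

@[simp]
lemma quotientEval_mk {p : ℤ[X]} {a : ℤ} (hp : p.eval a = 0) (q : ℤ[X]) :
    quotientEval hp (Ideal.Quotient.mk _ q) = q.eval a := rfl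

lemma isCongruentPairs_quotientEval {a b : ℤ} (hab : a < b) :
    IsCongruentPairs (b - a).toNat
      (quotientEval (p := (X - C a) * (X - C b)) (a := a) (by simp))
      (quotientEval (p := (X - C a) * (X - C b)) (a := b) (by simp)) := by
  have hn : (((b - a).toNat : ℕ) : ℤ) = b - a := Int.toNat_of_nonneg (by lia)
  refine ⟨fun r => ?_, fun r => ?_, fun x y hxy => ?_⟩
  · obtain ⟨q, rfl⟩ := Ideal.Quotient.mk_surjective r
    rw [quotientEval_mk, quotientEval_mk, Ideal.Quotient.eq_zero_iff_mem,
      Ideal.mem_span_singleton]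
    intro ha hb
    obtain ⟨s, rfl⟩ := dvd_iff_isRoot.2 ha
    apply mul_dvd_mul_left
    rw [dvd_iff_isRoot]
    simpa [sub_eq_zero, hab.ne'] using hb
  · obtain ⟨q, rfl⟩ := Ideal.Quotient.mk_surjective r
    rw [quotientEval_mk, quotientEval_mk, hn, ← dvd_neg, neg_sub]
    exact sub_dvd_eval_sub b a q
  · obtain ⟨k, hk⟩ := hxy
    refine ⟨Ideal.Quotient.mk _ (C x - C k * (X - C a)), by simp, ?_⟩
    rw [hn] at hk
    simp only [quotientEval_mk, eval_sub, eval_mul, eval_C, eval_X]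
    linarith

lemma card_units_zmod_quotient_neg_one {n : ℕ} (hn : 2 < n) :
    Nat.card ((ZMod n)ˣ ⧸ Subgroup.zpowers (-1 : (ZMod n)ˣ)) = n.totient / 2 := by
  have : NeZero n := ⟨by lia⟩
  have : Fact (2 < n) := ⟨hn⟩
  have hord : Nat.card (Subgroup.zpowers (-1 : (ZMod n)ˣ)) = 2 := by
    rw [Nat.card_zpowers]
    refine orderOf_eq_prime (by simp) fun h => ZMod.neg_one_ne_one (n := n) ?_
    simpa using congrArg Units.val h
  have := Subgroup.card_eq_card_quotient_mul_card_subgroup (Subgroup.zpowers (-1 : (ZMod n)ˣ))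
  rw [hord, Nat.card_eq_fintype_card, ZMod.card_units_eq_totient] at this
  lia

/-- For integers `a < b` with `b - a > 2` and `R = ℤ[x]/((x-a)(x-b))`, the ideal class
group `Cl(R)` is isomorphic to `(ℤ/(b-a))ˣ / {±1}`; in particular `|Cl(R)| = φ(b-a)/2`. -/
theorem stmt_17 (a b : ℤ) (hab : a < b) (h2 : b - a > 2) :
    Nonempty (classGroupOf (ℤ[X] ⧸ Ideal.span {(X - C a) * (X - C b)}) ≃*
      ((ZMod (b - a).toNat)ˣ ⧸ Subgroup.zpowers (-1 : (ZMod (b - a).toNat)ˣ))) ∧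
    Nat.card (classGroupOf (ℤ[X] ⧸ Ideal.span {(X - C a) * (X - C b)})) =
      (b - a).toNat.totient / 2 := by
  have : NeZero (b - a).toNat := ⟨by lia⟩
  obtain ⟨φ⟩ := (isCongruentPairs_quotientEval hab).nonempty_mulEquiv
  exact ⟨⟨φ⟩, by rw [Nat.card_congr φ.toEquiv, card_units_zmod_quotient_neg_one (by lia)]⟩
end

section
/- Let a < b < c be integers with c − a ≥ 4 and gcd(b−a, c−b, c−a) = 1, and let R = ℤ[x]/((x−a)(x−b)(x−c)). Then Cl(R) is isomorphic to the quotient of (ℤ/(b−a))^× × (ℤ/(c−b))^× × (ℤ/(c−a))^× by the order-4 subgroup {(1,1,1), (1,−1,−1), (−1,1,−1), (−1,−1,1)}. -/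
open Polynomial FractionalIdeal

section Congruence

variable {p q r : ℕ}

/-- The integral triples `(u, v, w)` with `v ≡ α u` mod `p`, `w ≡ β v` mod `q` and
`w ≡ γ u` mod `r`, where `g = (α, β, γ)`. -/
def TwistedCongruence (g : (ZMod p)ˣ × (ZMod q)ˣ × (ZMod r)ˣ) (t : ℚ × ℚ × ℚ) : Prop :=
  ∃ u v w : ℤ, t = ((u : ℚ), (v : ℚ), (w : ℚ)) ∧ (v : ZMod p) = g.1 * (u : ZMod p) ∧
    (w : ZMod q) = g.2.1 * (v : ZMod q) ∧ (w : ZMod r) = g.2.2 * (u : ZMod r)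

namespace TwistedCongruence

variable {g g' : (ZMod p)ˣ × (ZMod q)ˣ × (ZMod r)ˣ} {s t : ℚ × ℚ × ℚ}

lemma zero : TwistedCongruence g 0 :=
  ⟨0, 0, 0, by simp [Prod.ext_iff], by simp, by simp, by simp⟩

lemma add (hs : TwistedCongruence g s) (ht : TwistedCongruence g t) :
    TwistedCongruence g (s + t) := by
  obtain ⟨u, v, w, rfl, h1, h2, h3⟩ := hs
  obtain ⟨u', v', w', rfl, h1', h2', h3'⟩ := ht
  refine ⟨u + u', v + v', w + w', by simp, ?_, ?_, ?_⟩ <;> push_cast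
  · rw [h1, h1']; ring
  · rw [h2, h2']; ring
  · rw [h3, h3']; ring

lemma mul (hs : TwistedCongruence g s) (ht : TwistedCongruence g' t) :
    TwistedCongruence (g * g') (s * t) := by
  obtain ⟨u, v, w, rfl, h1, h2, h3⟩ := hs
  obtain ⟨u', v', w', rfl, h1', h2', h3'⟩ := ht
  refine ⟨u * u', v * v', w * w', by simp, ?_, ?_, ?_⟩ <;> push_cast
  · rw [h1, h1']; simp only [Prod.fst_mul, Units.val_mul]; ring
  · rw [h2, h2']; simp only [Prod.fst_mul, Prod.snd_mul, Units.val_mul]; ring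
  · rw [h3, h3']; simp only [Prod.snd_mul, Units.val_mul]; ring

lemma of_dvd {u v w : ℤ} (hu : (p * q * r : ℤ) ∣ u) (hv : (p * q : ℤ) ∣ v)
    (hw : (q * r : ℤ) ∣ w) : TwistedCongruence g ((u : ℚ), (v : ℚ), (w : ℚ)) := by
  obtain ⟨k, rfl⟩ := hu
  obtain ⟨l, rfl⟩ := hv
  obtain ⟨m, rfl⟩ := hw
  exact ⟨_, _, _, rfl, by simp, by simp, by simp⟩

/-- A triple of signs lies in the twisted lattice of `g` exactly for the sign-induced `g`. -/
lemma eq_of_sign {u v w : ℤ} (hu : u = 1 ∨ u = -1) (hv : v = 1 ∨ v = -1) (hw : w = 1 ∨ w = -1)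
    (h : TwistedCongruence g ((u : ℚ), (v : ℚ), (w : ℚ))) :
    g ∈ ({(1, 1, 1), (1, -1, -1), (-1, 1, -1), (-1, -1, 1)} :
      Set ((ZMod p)ˣ × (ZMod q)ˣ × (ZMod r)ˣ)) := by
  obtain ⟨u', v', w', h0, h1, h2, h3⟩ := h
  simp only [Prod.mk.injEq, Int.cast_inj] at h0
  obtain ⟨rfl, rfl, rfl⟩ := h0
  obtain ⟨α, β, γ⟩ := g
  simp only [Set.mem_insert_iff, Set.mem_singleton_iff, Prod.mk.injEq, Units.ext_iff,
    Units.val_neg, Units.val_one]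
  rcases hu with rfl | rfl <;> rcases hv with rfl | rfl <;> rcases hw with rfl | rfl <;>
    simp only [Int.cast_one, Int.cast_neg, mul_one, mul_neg, eq_neg_iff_add_eq_zero,
      neg_eq_iff_add_eq_zero] at h1 h2 h3 ⊢ <;> grind

end TwistedCongruence

end Congruence

lemma exists_int_lift_units_of_coprime {m n : ℕ} (h : m.Coprime n) (a : (ZMod m)ˣ)
    (b : (ZMod n)ˣ) : ∃ v v' : ℤ, (v : ZMod m) = a ∧ (v : ZMod n) = b ∧
      (v' : ZMod m) = ↑a⁻¹ ∧ (v' : ZMod n) = ↑b⁻¹ ∧ ∃ k : ℤ, v * v' = 1 + m * n * k := by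
  have key : ∀ (x : ZMod m) (y : ZMod n), ∃ v : ℤ, (v : ZMod m) = x ∧ (v : ZMod n) = y := by
    intro x y
    obtain ⟨z, hz⟩ := ZMod.intCast_surjective ((ZMod.chineseRemainder h).symm (x, y))
    have hz' := congrArg (ZMod.chineseRemainder h) hz
    rw [RingEquiv.apply_symm_apply, map_intCast] at hz'
    exact ⟨z, congrArg Prod.fst hz', congrArg Prod.snd hz'⟩
  obtain ⟨v, hv1, hv2⟩ := key a b
  obtain ⟨v', hv1', hv2'⟩ := key ↑a⁻¹ ↑b⁻¹
  refine ⟨v, v', hv1, hv2, hv1', hv2', ?_⟩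
  have h1 : (m : ℤ) ∣ v * v' - 1 := by
    rw [← ZMod.intCast_eq_intCast_iff_dvd_sub]
    push_cast; rw [hv1, hv1']; simp
  have h2 : (n : ℤ) ∣ v * v' - 1 := by
    rw [← ZMod.intCast_eq_intCast_iff_dvd_sub]
    push_cast; rw [hv2, hv2']; simp
  obtain ⟨k, hk⟩ := (Nat.isCoprime_iff_coprime.mpr h).mul_dvd h1 h2
  exact ⟨k, by linarith⟩

/-- A nonzero additive subgroup of `ℚ` with bounded denominators is cyclic. -/
lemma exists_generator_of_addSubgroup_rat (S : AddSubgroup ℚ) (d : ℤ) (hd : d ≠ 0)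
    (hS : ∀ x ∈ S, ∃ n : ℤ, d * x = n) (hne : ∃ x ∈ S, x ≠ 0) :
    ∃ k : ℚ, k ≠ 0 ∧ k ∈ S ∧ ∀ x ∈ S, ∃ n : ℤ, x = n * k := by
  have hd' : (d : ℚ) ≠ 0 := by exact_mod_cast hd
  let T : AddSubgroup ℤ :=
    S.comap ((AddMonoidHom.mulRight (1 / d : ℚ)).comp (Int.castAddHom ℚ))
  have hT : ∀ n : ℤ, n ∈ T ↔ (n : ℚ) * (1 / d) ∈ S := fun n => Iff.rfl
  obtain ⟨t, ht⟩ := Int.subgroup_cyclic T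
  have hmul : ∀ x ∈ S, ∃ n : ℤ, x = n * (t * (1 / d)) := by
    intro x hx
    obtain ⟨n, hn⟩ := hS x hx
    have hnT : n ∈ T := by
      rw [hT, ← hn]; convert hx using 1; field_simp
    rw [ht, AddSubgroup.mem_closure_singleton] at hnT
    obtain ⟨l, hl⟩ := hnT
    refine ⟨l, ?_⟩
    have : (n : ℚ) = l * t := by rw [← hl]; simp
    rw [this] at hn
    field_simp
    linarith
  refine ⟨t * (1 / d), ?_, ?_, hmul⟩
  · obtain ⟨x, hx, hx0⟩ := hne
    obtain ⟨n, hn⟩ := hmul x hx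
    rintro h0
    rw [h0, mul_zero] at hn
    exact hx0 hn
  · rw [← hT, ht]
    exact AddSubgroup.subset_closure rfl

section TwistedIdeal

open scoped nonZeroDivisors

variable {p q r : ℕ} {R K : Type*} [CommRing R] [CommRing K] [Algebra R K] [IsFractionRing R K]

/-- The comparison of the total quotient ring `K` of `R` with `ℚ³` identifies `R` with the
integral triples `(u, v, w)` with `u ≡ v` mod `p`, `v ≡ w` mod `q`, `u ≡ w` mod `r`. -/
def IsCongruenceOrder (p q r : ℕ) (R : Type*) {K : Type*} [CommRing R] [CommRing K] [Algebra R K]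
    (e : K ≃+* ℚ × ℚ × ℚ) : Prop :=
  ∀ x : K, (∃ y : R, algebraMap R K y = x) ↔
    TwistedCongruence (1 : (ZMod p)ˣ × (ZMod q)ˣ × (ZMod r)ˣ) (e x)

namespace IsCongruenceOrder

variable {e : K ≃+* ℚ × ℚ × ℚ} (he : IsCongruenceOrder p q r R e)
  (hp : p ≠ 0) (hq : q ≠ 0) (hr : r ≠ 0)

omit [IsFractionRing R K] in
include he in
lemma mem_one {x : K} : x ∈ (1 : FractionalIdeal R⁰ K) ↔
    TwistedCongruence (1 : (ZMod p)ˣ × (ZMod q)ˣ × (ZMod r)ˣ) (e x) := by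
  rw [FractionalIdeal.mem_one_iff]
  exact he x

/-- The fractional ideal of `R` whose elements are the twisted congruent triples. -/
def twist (g : (ZMod p)ˣ × (ZMod q)ˣ × (ZMod r)ˣ) : FractionalIdeal R⁰ K :=
  ⟨{ carrier := {x | TwistedCongruence g (e x)}
     add_mem' := by
      intro x y hx hy
      change TwistedCongruence g (e (x + y))
      rw [map_add]
      exact TwistedCongruence.add hx hy
     zero_mem' := by
      change TwistedCongruence g (e 0)
      rw [map_zero]
      exact TwistedCongruence.zero
     smul_mem' := by
      intro c x hx
      change TwistedCongruence g (e (c • x))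
      rw [Algebra.smul_def, map_mul, ← one_mul g]
      exact ((he _).mp ⟨c, rfl⟩).mul hx }, by
    have hN : (p * q * r : ℕ) ≠ 0 := mul_ne_zero (mul_ne_zero hp hq) hr
    refine ⟨((p * q * r : ℕ) : R), ?_, ?_⟩
    · refine mem_nonZeroDivisors_of_injective (IsFractionRing.injective R K) ?_
      refine mem_nonZeroDivisors_of_injective e.injective ?_
      refine IsUnit.mem_nonZeroDivisors ?_
      rw [map_natCast, map_natCast]
      exact isUnit_iff_exists_inv.mpr ⟨(((p * q * r : ℕ) : ℚ)⁻¹, ((p * q * r : ℕ) : ℚ)⁻¹,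
        ((p * q * r : ℕ) : ℚ)⁻¹), by
          ext <;> simp only [Prod.fst_mul, Prod.snd_mul, Prod.fst_natCast, Prod.snd_natCast,
            Prod.fst_one, Prod.snd_one] <;> exact mul_inv_cancel₀ (Nat.cast_ne_zero.mpr hN)⟩
    · rintro x ⟨u, v, w, hx, -⟩
      refine (he _).mpr ?_
      have : e (((p * q * r : ℕ) : R) • x) =
          (((p * q * r * u : ℤ) : ℚ), ((p * q * r * v : ℤ) : ℚ), ((p * q * r * w : ℤ) : ℚ)) := by
        rw [Algebra.smul_def, map_natCast, map_mul, map_natCast, hx]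
        ext <;> simp
      rw [this]
      refine TwistedCongruence.of_dvd ⟨u, rfl⟩ ⟨r * v, by ring⟩ ⟨p * w, by ring⟩⟩

lemma mem_twist {g : (ZMod p)ˣ × (ZMod q)ˣ × (ZMod r)ˣ} {x : K} :
    x ∈ he.twist hp hq hr g ↔ TwistedCongruence g (e x) := Iff.rfl

lemma twist_one : he.twist hp hq hr 1 = 1 := by
  ext x
  rw [mem_twist, he.mem_one]

lemma twist_mul_le (g g' : (ZMod p)ˣ × (ZMod q)ˣ × (ZMod r)ˣ) :
    he.twist hp hq hr g * he.twist hp hq hr g' ≤ he.twist hp hq hr (g * g') := by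
  rw [FractionalIdeal.mul_le]
  intro x hx y hy
  rw [mem_twist, map_mul]
  exact TwistedCongruence.mul hx hy

lemma one_mem_twist_mul_twist_inv (hpq : p.Coprime q) (hqr : q.Coprime r)
    (g : (ZMod p)ˣ × (ZMod q)ˣ × (ZMod r)ˣ) :
    (1 : K) ∈ he.twist hp hq hr g * he.twist hp hq hr g⁻¹ := by
  obtain ⟨v, v', hv1, hv2, hv1', hv2', k, hk⟩ := exists_int_lift_units_of_coprime hpq g.1 1
  obtain ⟨w, w', hw1, hw2, hw1', hw2', l, hl⟩ :=
    exists_int_lift_units_of_coprime hqr g.2.1 g.2.2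
  have mem : ∀ s t : ℚ × ℚ × ℚ, TwistedCongruence g s → TwistedCongruence g⁻¹ t →
      e.symm s * e.symm t ∈ he.twist hp hq hr g * he.twist hp hq hr g⁻¹ := fun s t hs ht =>
    FractionalIdeal.mul_mem_mul (by rwa [mem_twist, RingEquiv.apply_symm_apply])
      (by rwa [mem_twist, RingEquiv.apply_symm_apply])
  have hx : TwistedCongruence g (((1 : ℤ) : ℚ), (v : ℚ), (w : ℚ)) :=
    ⟨_, _, _, rfl, by simp [hv1], by simp [hv2, hw1], by simp [hw2]⟩
  have hy : TwistedCongruence g⁻¹ (((1 : ℤ) : ℚ), (v' : ℚ), (w' : ℚ)) :=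
    ⟨_, _, _, rfl, by simp [hv1'], by simp [hv2', hw1'], by simp [hw2']⟩
  have hmid : ∀ (g' : (ZMod p)ˣ × (ZMod q)ˣ × (ZMod r)ˣ) (c : ℤ),
      TwistedCongruence g' (((0 : ℤ) : ℚ), ((p * q * c : ℤ) : ℚ), ((0 : ℤ) : ℚ)) := fun g' c =>
    .of_dvd (dvd_zero _) (dvd_mul_right _ _) (dvd_zero _)
  have hlast : ∀ (g' : (ZMod p)ˣ × (ZMod q)ˣ × (ZMod r)ˣ) (c : ℤ),
      TwistedCongruence g' (((0 : ℤ) : ℚ), ((0 : ℤ) : ℚ), ((q * r * c : ℤ) : ℚ)) := fun g' c =>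
    .of_dvd (dvd_zero _) (dvd_zero _) (dvd_mul_right _ _)
  have hsum := Submodule.sub_mem
    ((he.twist hp hq hr g * he.twist hp hq hr g⁻¹ : FractionalIdeal R⁰ K) : Submodule R K)
    (Submodule.add_mem _ (Submodule.add_mem _ (mem _ _ hx hy)
      (mem _ _ (hmid g k) (hmid g⁻¹ k))) (mem _ _ (hlast g l) (hlast g⁻¹ l)))
    (Submodule.add_mem _ (mem _ _ (hmid g (k * v)) hy) (mem _ _ (hlast g (l * w)) hy))
  rw [← FractionalIdeal.mem_coe]
  convert hsum using 1
  apply e.injective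
  have hk' : (v : ℚ) * v' = 1 + p * q * k := by exact_mod_cast hk
  have hl' : (w : ℚ) * w' = 1 + q * r * l := by exact_mod_cast hl
  simp only [map_one, map_sub, map_add, map_mul, RingEquiv.apply_symm_apply]
  ext
  · simp
  · simp
    linear_combination (p * q * k - 1 : ℚ) * hk'
  · simp
    linear_combination (q * r * l - 1 : ℚ) * hl'

lemma twist_mul_twist_inv (hpq : p.Coprime q) (hqr : q.Coprime r)
    (g : (ZMod p)ˣ × (ZMod q)ˣ × (ZMod r)ˣ) :
    he.twist hp hq hr g * he.twist hp hq hr g⁻¹ = 1 := by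
  refine le_antisymm ?_ ?_
  · have := he.twist_mul_le hp hq hr g g⁻¹
    rwa [mul_inv_cancel, twist_one] at this
  · rw [FractionalIdeal.one_le]
    exact he.one_mem_twist_mul_twist_inv hp hq hr hpq hqr g

lemma twist_mul (hpq : p.Coprime q) (hqr : q.Coprime r)
    (g g' : (ZMod p)ˣ × (ZMod q)ˣ × (ZMod r)ˣ) :
    he.twist hp hq hr (g * g') = he.twist hp hq hr g * he.twist hp hq hr g' := by
  refine le_antisymm ?_ (he.twist_mul_le hp hq hr g g')
  calc he.twist hp hq hr (g * g')
      = he.twist hp hq hr (g * g') * he.twist hp hq hr g'⁻¹ * he.twist hp hq hr g' := by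
        rw [mul_assoc, mul_comm (he.twist hp hq hr g'⁻¹),
          he.twist_mul_twist_inv hp hq hr hpq hqr, mul_one]
    _ ≤ _ := by
        gcongr
        have := he.twist_mul_le hp hq hr (g * g') g'⁻¹
        rwa [mul_inv_cancel_right] at this

/-- The homomorphism sending `g` to its twisted fractional ideal. -/
def twistHom (hpq : p.Coprime q) (hqr : q.Coprime r) :
    (ZMod p)ˣ × (ZMod q)ˣ × (ZMod r)ˣ →* (FractionalIdeal R⁰ K)ˣ :=
  MonoidHom.toHomUnits
    { toFun := he.twist hp hq hr
      map_one' := he.twist_one hp hq hr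
      map_mul' := he.twist_mul hp hq hr hpq hqr }

lemma coe_twistHom (hpq : p.Coprime q) (hqr : q.Coprime r)
    (g : (ZMod p)ˣ × (ZMod q)ˣ × (ZMod r)ˣ) :
    (he.twistHom hp hq hr hpq hqr g : FractionalIdeal R⁰ K) = he.twist hp hq hr g := rfl

lemma twist_eq_spanSingleton_iff (hpq : p.Coprime q) (hqr : q.Coprime r)
    (g : (ZMod p)ˣ × (ZMod q)ˣ × (ZMod r)ˣ) :
    (∃ k : Kˣ, he.twist hp hq hr g = spanSingleton R⁰ (k : K)) ↔
      g ∈ ({(1, 1, 1), (1, -1, -1), (-1, 1, -1), (-1, -1, 1)} :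
        Set ((ZMod p)ˣ × (ZMod q)ˣ × (ZMod r)ˣ)) := by
  constructor
  · rintro ⟨k, hk⟩
    have hinv : he.twist hp hq hr g⁻¹ = spanSingleton R⁰ ((k⁻¹ : Kˣ) : K) := by
      calc he.twist hp hq hr g⁻¹
          = he.twist hp hq hr g⁻¹ *
              (spanSingleton R⁰ (k : K) * spanSingleton R⁰ ((k⁻¹ : Kˣ) : K)) := by
            rw [spanSingleton_mul_spanSingleton, Units.mul_inv, spanSingleton_one, mul_one]
        _ = _ := by
            rw [← hk, ← mul_assoc, mul_comm (he.twist hp hq hr g⁻¹),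
              he.twist_mul_twist_inv hp hq hr hpq hqr, one_mul]
    have h1 : TwistedCongruence g (e k) := by
      rw [← he.mem_twist hp hq hr, hk]
      exact mem_spanSingleton_self _ _
    have h2 : TwistedCongruence g⁻¹ (e ((k⁻¹ : Kˣ) : K)) := by
      rw [← he.mem_twist hp hq hr, hinv]
      exact mem_spanSingleton_self _ _
    have h1' := h1
    obtain ⟨u, v, w, h, -⟩ := h1
    obtain ⟨u', v', w', h', -⟩ := h2
    have hprod : e k * e ((k⁻¹ : Kˣ) : K) = 1 := by
      rw [← map_mul, Units.mul_inv, map_one]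
    rw [h, h'] at hprod
    simp only [Prod.mk_mul_mk, Prod.mk_eq_one] at hprod
    norm_cast at hprod
    rw [h] at h1'
    exact TwistedCongruence.eq_of_sign (Int.eq_one_or_neg_one_of_mul_eq_one hprod.1)
      (Int.eq_one_or_neg_one_of_mul_eq_one hprod.2.1)
      (Int.eq_one_or_neg_one_of_mul_eq_one hprod.2.2) h1'
  · intro hg
    have key : ∀ t : ℚ × ℚ × ℚ, t * t = 1 → g * g = 1 → TwistedCongruence g t →
        ∃ k : Kˣ, he.twist hp hq hr g = spanSingleton R⁰ (k : K) := by
      intro t ht hgg hgt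
      have hkk : e.symm t * e.symm t = 1 := by rw [← map_mul, ht, map_one]
      have hle : spanSingleton R⁰ (e.symm t) ≤ he.twist hp hq hr g := by
        rw [FractionalIdeal.spanSingleton_le_iff_mem, mem_twist, RingEquiv.apply_symm_apply]
        exact hgt
      refine ⟨⟨e.symm t, e.symm t, hkk, hkk⟩, le_antisymm ?_ hle⟩
      calc he.twist hp hq hr g
          = he.twist hp hq hr g * (spanSingleton R⁰ (e.symm t) * spanSingleton R⁰ (e.symm t)) := by
            rw [spanSingleton_mul_spanSingleton, hkk, spanSingleton_one, mul_one]
        _ ≤ he.twist hp hq hr g * (he.twist hp hq hr g * spanSingleton R⁰ (e.symm t)) := by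
            gcongr
        _ = spanSingleton R⁰ (e.symm t) := by
            rw [← mul_assoc, ← he.twist_mul hp hq hr hpq hqr, hgg, twist_one, one_mul]
    rcases hg with rfl | rfl | rfl | rfl
    · exact key 1 (by simp) (by simp) ⟨1, 1, 1, by simp [Prod.ext_iff], by simp, by simp, by simp⟩
    · exact key (1, 1, -1) (by simp) (by simp) ⟨1, 1, -1, by simp, by simp, by simp, by simp⟩
    · exact key (-1, 1, 1) (by simp) (by simp) ⟨-1, 1, 1, by simp, by simp, by simp, by simp⟩
    · exact key (1, -1, 1) (by simp) (by simp) ⟨1, -1, 1, by simp, by simp, by simp, by simp⟩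

end IsCongruenceOrder

section Coordinate

variable {f f' : K →+* ℚ} {I J : FractionalIdeal R⁰ K}

/-- The image of the fractional ideal `I` under the coordinate `f` is `ℤ`. -/
def HasImageInt (f : K →+* ℚ) (I : FractionalIdeal R⁰ K) : Prop :=
  (∀ x ∈ I, ∃ n : ℤ, f x = n) ∧ ∃ x ∈ I, f x = 1

omit [IsFractionRing R K] in
lemma algebraMap_mem_one (y : R) : algebraMap R K y ∈ (1 : FractionalIdeal R⁰ K) :=
  (FractionalIdeal.mem_one_iff _).mpr ⟨y, rfl⟩

omit [IsFractionRing R K] in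
lemma HasImageInt.of_mul_eq_one (hf : ∀ x ∈ (1 : FractionalIdeal R⁰ K), ∃ n : ℤ, f x = n)
    (hI : HasImageInt f I) (hIJ : I * J = 1) : HasImageInt f J := by
  constructor
  · intro y hy
    obtain ⟨x, hx, hx1⟩ := hI.2
    obtain ⟨n, hn⟩ := hf (x * y) (hIJ ▸ FractionalIdeal.mul_mem_mul hx hy)
    exact ⟨n, by rw [← hn, map_mul, hx1, one_mul]⟩
  · have key : ∀ z ∈ I * J, ∃ y ∈ J, f y = f z := by
      intro z hz
      refine FractionalIdeal.mul_induction_on hz ?_ ?_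
      · intro x hx y hy
        obtain ⟨n, hn⟩ := hI.1 x hx
        refine ⟨(n : R) • y, Submodule.smul_mem J.val _ hy, ?_⟩
        rw [Algebra.smul_def, map_mul, map_mul, hn, map_intCast, map_intCast]
      · rintro x y ⟨x', hx', hx⟩ ⟨y', hy', hy⟩
        exact ⟨x' + y', Submodule.add_mem J.val hx' hy', by rw [map_add, map_add, hx, hy]⟩
    obtain ⟨y, hy, hy1⟩ := key 1 (hIJ ▸ FractionalIdeal.one_mem_one _)
    exact ⟨y, hy, by rw [hy1, map_one]⟩

lemma exists_generator_of_mul_eq_one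
    (hf : ∀ x ∈ (1 : FractionalIdeal R⁰ K), ∃ n : ℤ, f x = n) (hIJ : I * J = 1) :
    ∃ k : ℚ, k ≠ 0 ∧ (∃ x ∈ I, f x = k) ∧ ∀ x ∈ I, ∃ n : ℤ, f x = n * k := by
  obtain ⟨d, hd, hdI⟩ := I.isFractional
  obtain ⟨n, hn⟩ := hf _ (algebraMap_mem_one d)
  have hn0 : f (algebraMap R K d) ≠ 0 :=
    ((IsLocalization.map_units K (⟨d, hd⟩ : R⁰)).map f).ne_zero
  let S : AddSubgroup ℚ := I.val.toAddSubgroup.map f.toAddMonoidHom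
  have hne : ∃ x ∈ S, x ≠ 0 := by
    by_contra! hcon
    have key : ∀ z ∈ I * J, f z = 0 := by
      intro z hz
      refine FractionalIdeal.mul_induction_on hz ?_ ?_
      · intro x hx y hy
        rw [map_mul, hcon (f x) ⟨x, hx, rfl⟩, zero_mul]
      · intro x y hx hy
        rw [map_add, hx, hy, add_zero]
    have := key 1 (hIJ ▸ FractionalIdeal.one_mem_one _)
    rw [map_one] at this
    exact one_ne_zero this
  obtain ⟨k, hk0, ⟨x, hx, hxk⟩, hk⟩ := exists_generator_of_addSubgroup_rat S n
    (by rintro rfl; exact hn0 (by simpa using hn)) (by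
      rintro _ ⟨x, hx, rfl⟩
      obtain ⟨y, hy⟩ := hdI x hx
      obtain ⟨m, hm⟩ := hf _ (algebraMap_mem_one y)
      refine ⟨m, ?_⟩
      rw [hy, Algebra.smul_def, map_mul, hn] at hm
      exact hm) hne
  exact ⟨k, hk0, ⟨x, hx, hxk⟩, fun y hy => hk _ ⟨y, hy, rfl⟩⟩

omit [IsFractionRing R K] in
/-- Two coordinates of an ideal with image `ℤ` in both are related by a unit mod `m` as soon as
they agree mod `m` on products with the inverse ideal. -/
lemma exists_unit_of_hasImageInt {m : ℕ} (hI : HasImageInt f I) (hI' : HasImageInt f' I)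
    (hJ : HasImageInt f J) (hJ' : HasImageInt f' J)
    (h : ∀ x ∈ I, ∀ y ∈ J, ∀ s t : ℤ, f (x * y) = s → f' (x * y) = t → (t : ZMod m) = s) :
    ∃ α : (ZMod m)ˣ, ∀ x ∈ I, ∀ u v : ℤ, f x = u → f' x = v → (v : ZMod m) = α * (u : ZMod m) := by
  have cross : ∀ x ∈ I, ∀ x' ∈ I, ∀ u v u' v' : ℤ, f x = u → f' x = v → f x' = u' → f' x' = v' →
      (u * v' : ZMod m) = u' * v := by
    intro x hx x' hx' u v u' v' hu hv hu' hv'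
    obtain ⟨y, hy, hy1⟩ := hJ.2
    obtain ⟨n, hn⟩ := hJ'.1 y hy
    have h1 := h x hx y hy u (v * n) (by rw [map_mul, hu, hy1, mul_one])
      (by rw [map_mul, hv, hn]; push_cast; rfl)
    have h2 := h x' hx' y hy u' (v' * n) (by rw [map_mul, hu', hy1, mul_one])
      (by rw [map_mul, hv', hn]; push_cast; rfl)
    push_cast at h1 h2
    rw [← h1, ← h2]
    ring
  obtain ⟨x, hx, hx1⟩ := hI.2
  obtain ⟨A, hA⟩ := hI'.1 x hx
  obtain ⟨x', hx', hx1'⟩ := hI'.2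
  obtain ⟨B, hB⟩ := hI.1 x' hx'
  have hAB := cross x hx x' hx' 1 A B 1 (by simpa using hx1) hA hB (by simpa using hx1')
  push_cast at hAB
  rw [one_mul] at hAB
  refine ⟨⟨A, B, by rw [mul_comm, ← hAB], hAB.symm⟩, fun z hz u v hu hv => ?_⟩
  have := cross x hx z hz 1 A u v (by simpa using hx1) hA hu hv
  push_cast at this
  rw [one_mul] at this
  rw [this, mul_comm]

end Coordinate

section Coordinates

variable {K : Type*} [CommRing K] (e : K ≃+* ℚ × ℚ × ℚ)

/-- The first coordinate on `K ≃ ℚ³`. -/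
def coordFst : K →+* ℚ := (RingHom.fst ℚ (ℚ × ℚ)).comp e

/-- The second coordinate on `K ≃ ℚ³`. -/
def coordSnd : K →+* ℚ := (RingHom.fst ℚ ℚ).comp ((RingHom.snd ℚ (ℚ × ℚ)).comp e)

/-- The third coordinate on `K ≃ ℚ³`. -/
def coordTrd : K →+* ℚ := (RingHom.snd ℚ ℚ).comp ((RingHom.snd ℚ (ℚ × ℚ)).comp e)

lemma eq_coords (x : K) : e x = (coordFst e x, coordSnd e x, coordTrd e x) := rfl

end Coordinates

/-- All three coordinate images of the fractional ideal `I` are equal to `ℤ`. -/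
structure HasCoordImagesInt (e : K ≃+* ℚ × ℚ × ℚ) (I : FractionalIdeal R⁰ K) : Prop where
  fst : HasImageInt (coordFst e) I
  snd : HasImageInt (coordSnd e) I
  trd : HasImageInt (coordTrd e) I

namespace IsCongruenceOrder

variable {e : K ≃+* ℚ × ℚ × ℚ} (he : IsCongruenceOrder p q r R e)
  (hp : p ≠ 0) (hq : q ≠ 0) (hr : r ≠ 0) {I J : FractionalIdeal R⁰ K}

omit [IsFractionRing R K] in
include he in
lemma exists_int_coords {x : K} (hx : x ∈ (1 : FractionalIdeal R⁰ K)) :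
    (∃ n : ℤ, coordFst e x = n) ∧ (∃ n : ℤ, coordSnd e x = n) ∧ ∃ n : ℤ, coordTrd e x = n := by
  obtain ⟨u, v, w, h, -⟩ := he.mem_one.mp hx
  simp only [eq_coords, Prod.mk.injEq] at h
  exact ⟨⟨u, h.1⟩, ⟨v, h.2.1⟩, ⟨w, h.2.2⟩⟩

include he in
/-- Up to a principal factor, every invertible fractional ideal has all coordinate images `ℤ`. -/
lemma exists_hasCoordImagesInt (hIJ : I * J = 1) :
    ∃ k : Kˣ, HasCoordImagesInt e (spanSingleton R⁰ (k : K) * I) := by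
  obtain ⟨k₁, h₁, hI₁⟩ :=
    exists_generator_of_mul_eq_one (fun x hx => (he.exists_int_coords hx).1) hIJ
  obtain ⟨k₂, h₂, hI₂⟩ :=
    exists_generator_of_mul_eq_one (fun x hx => (he.exists_int_coords hx).2.1) hIJ
  obtain ⟨k₃, h₃, hI₃⟩ :=
    exists_generator_of_mul_eq_one (fun x hx => (he.exists_int_coords hx).2.2) hIJ
  have key : ∀ (f : K →+* ℚ) (x : K) (k : ℚ), k ≠ 0 → f x = k⁻¹ →
      ((∃ y ∈ I, f y = k) ∧ ∀ y ∈ I, ∃ n : ℤ, f y = n * k) →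
      HasImageInt f (spanSingleton R⁰ x * I) := by
    rintro f x k hk hx ⟨⟨y, hy, hyk⟩, hI⟩
    constructor
    · intro z hz
      obtain ⟨y, hy, rfl⟩ := FractionalIdeal.mem_singleton_mul.mp hz
      obtain ⟨n, hn⟩ := hI y hy
      exact ⟨n, by rw [map_mul, hx, hn]; field_simp⟩
    · exact ⟨x * y, FractionalIdeal.mem_singleton_mul.mpr ⟨y, hy, rfl⟩, by
        rw [map_mul, hx, hyk, inv_mul_cancel₀ hk]⟩
  have hunit : (k₁⁻¹, k₂⁻¹, k₃⁻¹) * (k₁, k₂, k₃) = (1 : ℚ × ℚ × ℚ) := by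
    simp [h₁, h₂, h₃]
  have hk : e.symm (k₁⁻¹, k₂⁻¹, k₃⁻¹) * e.symm (k₁, k₂, k₃) = 1 := by
    rw [← map_mul, hunit, map_one]
  have hcoord := eq_coords e (e.symm (k₁⁻¹, k₂⁻¹, k₃⁻¹))
  rw [RingEquiv.apply_symm_apply] at hcoord
  simp only [Prod.mk.injEq] at hcoord
  exact ⟨⟨_, _, hk, by rw [mul_comm, hk]⟩, key _ _ k₁ h₁ hcoord.1.symm hI₁,
    key _ _ k₂ h₂ hcoord.2.1.symm hI₂, key _ _ k₃ h₃ hcoord.2.2.symm hI₃⟩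

omit [IsFractionRing R K] in
include he in
lemma hasCoordImagesInt_of_mul_eq_one (hI : HasCoordImagesInt e I) (hIJ : I * J = 1) :
    HasCoordImagesInt e J :=
  ⟨hI.fst.of_mul_eq_one (fun _ hx => (he.exists_int_coords hx).1) hIJ,
    hI.snd.of_mul_eq_one (fun _ hx => (he.exists_int_coords hx).2.1) hIJ,
    hI.trd.of_mul_eq_one (fun _ hx => (he.exists_int_coords hx).2.2) hIJ⟩

lemma exists_le_twist (hI : HasCoordImagesInt e I) (hIJ : I * J = 1) :
    ∃ g, I ≤ he.twist hp hq hr g := by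
  have hJ := he.hasCoordImagesInt_of_mul_eq_one hI hIJ
  have hmul : ∀ x ∈ I, ∀ y ∈ J,
      TwistedCongruence (1 : (ZMod p)ˣ × (ZMod q)ˣ × (ZMod r)ˣ) (e (x * y)) := fun x hx y hy =>
    he.mem_one.mp (hIJ ▸ FractionalIdeal.mul_mem_mul hx hy)
  obtain ⟨α, hα⟩ := exists_unit_of_hasImageInt (m := p) hI.fst hI.snd hJ.fst hJ.snd (by
    intro x hx y hy s t hs ht
    obtain ⟨u, v, w, h, h1, -, -⟩ := hmul x hx y hy
    rw [eq_coords, hs, ht] at h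
    simp only [Prod.mk.injEq, Int.cast_inj] at h
    rw [h.1, h.2.1]
    simpa using h1)
  obtain ⟨β, hβ⟩ := exists_unit_of_hasImageInt (m := q) hI.snd hI.trd hJ.snd hJ.trd (by
    intro x hx y hy s t hs ht
    obtain ⟨u, v, w, h, -, h2, -⟩ := hmul x hx y hy
    rw [eq_coords, hs, ht] at h
    simp only [Prod.mk.injEq, Int.cast_inj] at h
    rw [h.2.1, h.2.2]
    simpa using h2)
  obtain ⟨γ, hγ⟩ := exists_unit_of_hasImageInt (m := r) hI.fst hI.trd hJ.fst hJ.trd (by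
    intro x hx y hy s t hs ht
    obtain ⟨u, v, w, h, -, -, h3⟩ := hmul x hx y hy
    rw [eq_coords, hs, ht] at h
    simp only [Prod.mk.injEq, Int.cast_inj] at h
    rw [h.1, h.2.2]
    simpa using h3)
  refine ⟨(α, β, γ), fun x hx => ?_⟩
  obtain ⟨u, hu⟩ := hI.fst.1 x hx
  obtain ⟨v, hv⟩ := hI.snd.1 x hx
  obtain ⟨w, hw⟩ := hI.trd.1 x hx
  exact ⟨u, v, w, by rw [eq_coords, hu, hv, hw], hα x hx u v hu hv, hβ x hx v w hv hw,
    hγ x hx u w hu hw⟩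

include he in
lemma eq_one_of_one_mem_twist {g : (ZMod p)ˣ × (ZMod q)ˣ × (ZMod r)ˣ}
    (h : (1 : K) ∈ he.twist hp hq hr g) : g = 1 := by
  rw [mem_twist, map_one] at h
  obtain ⟨u, v, w, h0, h1, h2, h3⟩ := h
  simp only [Prod.ext_iff, Prod.fst_one, Prod.snd_one] at h0
  norm_cast at h0
  obtain ⟨rfl, rfl, rfl⟩ := h0
  simp only [Int.cast_one, mul_one] at h1 h2 h3
  ext
  · exact h1.symm
  · exact h2.symm
  · exact h3.symm

lemma exists_eq_twist (hI : HasCoordImagesInt e I) (hIJ : I * J = 1) :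
    ∃ g, I = he.twist hp hq hr g := by
  obtain ⟨g, hg⟩ := he.exists_le_twist hp hq hr hI hIJ
  obtain ⟨g', hg'⟩ := he.exists_le_twist hp hq hr
    (he.hasCoordImagesInt_of_mul_eq_one hI hIJ) (by rw [mul_comm, hIJ])
  have hgg' : g * g' = 1 := by
    apply he.eq_one_of_one_mem_twist hp hq hr
    have h1 : (1 : K) ∈ I * J := hIJ ▸ FractionalIdeal.one_mem_one _
    exact he.twist_mul_le hp hq hr g g' (mul_le_mul' hg hg' h1)
  refine ⟨g, le_antisymm hg ?_⟩
  calc he.twist hp hq hr g = he.twist hp hq hr g * J * I := by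
        rw [mul_assoc, mul_comm J, hIJ, mul_one]
    _ ≤ he.twist hp hq hr g * he.twist hp hq hr g' * I := by gcongr
    _ ≤ he.twist hp hq hr (g * g') * I := by
        gcongr
        exact he.twist_mul_le hp hq hr g g'
    _ = I := by rw [hgg', twist_one, one_mul]

end IsCongruenceOrder

theorem IsCongruenceOrder.exists_classGroupOf_mulEquiv {e : FractionRing R ≃+* ℚ × ℚ × ℚ}
    (he : IsCongruenceOrder p q r R e) (hp : p ≠ 0) (hq : q ≠ 0) (hr : r ≠ 0)
    (hpq : p.Coprime q) (hqr : q.Coprime r) :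
    ∃ H : Subgroup ((ZMod p)ˣ × (ZMod q)ˣ × (ZMod r)ˣ),
      (H : Set ((ZMod p)ˣ × (ZMod q)ˣ × (ZMod r)ˣ)) =
        {(1, 1, 1), (1, -1, -1), (-1, 1, -1), (-1, -1, 1)} ∧
      Nonempty (classGroupOf R ≃* ((ZMod p)ˣ × (ZMod q)ˣ × (ZMod r)ˣ) ⧸ H) := by
  let φ : (ZMod p)ˣ × (ZMod q)ˣ × (ZMod r)ˣ →*
      (FractionalIdeal R⁰ (FractionRing R))ˣ ⧸ principalUnits R :=
    (QuotientGroup.mk' (principalUnits R)).comp (he.twistHom hp hq hr hpq hqr)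
  have hφ : Function.Surjective φ := by
    intro C
    obtain ⟨I, rfl⟩ := QuotientGroup.mk_surjective C
    obtain ⟨k, hk⟩ := he.exists_hasCoordImagesInt (Units.mul_inv I)
    have hinv : spanSingleton R⁰ (k : FractionRing R) * (I : FractionalIdeal R⁰ _) *
        (spanSingleton R⁰ ((k⁻¹ : (FractionRing R)ˣ) : FractionRing R) *
          ((I⁻¹ : (FractionalIdeal R⁰ (FractionRing R))ˣ) : FractionalIdeal R⁰ _)) = 1 := by
      rw [mul_mul_mul_comm, spanSingleton_mul_spanSingleton, Units.mul_inv, Units.mul_inv,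
        spanSingleton_one, one_mul]
    obtain ⟨g, hg⟩ := he.exists_eq_twist hp hq hr hk hinv
    refine ⟨g, Eq.symm (QuotientGroup.eq.mpr ?_)⟩
    refine ⟨k, ?_⟩
    rw [Units.val_mul, coe_twistHom, ← hg, mul_left_comm, Units.inv_mul, mul_one]
  refine ⟨φ.ker, ?_, ⟨(QuotientGroup.quotientKerEquivOfSurjective φ hφ).symm⟩⟩
  ext g
  rw [← he.twist_eq_spanSingleton_iff hp hq hr hpq hqr, SetLike.mem_coe, MonoidHom.mem_ker]
  exact QuotientGroup.eq_one_iff _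

end TwistedIdeal

section Evaluation

variable (a b c : ℤ)

/-- Evaluation of `ℤ[X] / ((X - a) (X - b) (X - c))` at the three roots. -/
noncomputable def evalRoots :
    (ℤ[X] ⧸ Ideal.span {(X - C a) * (X - C b) * (X - C c)}) →+* ℤ × ℤ × ℤ :=
  Ideal.Quotient.lift _ ((evalRingHom a).prod ((evalRingHom b).prod (evalRingHom c))) (by
    intro f hf
    obtain ⟨g, rfl⟩ := Ideal.mem_span_singleton.mp hf
    simp [Prod.ext_iff])

lemma evalRoots_mk (f : ℤ[X]) :
    evalRoots a b c (Ideal.Quotient.mk _ f) = (f.eval a, f.eval b, f.eval c) := rfl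

variable {a b c}

lemma evalRoots_injective (hab : a < b) (hbc : b < c) :
    Function.Injective (evalRoots a b c) := by
  rw [injective_iff_map_eq_zero]
  intro x hx
  obtain ⟨f, rfl⟩ := Ideal.Quotient.mk_surjective x
  rw [evalRoots_mk] at hx
  simp only [Prod.mk_eq_zero] at hx
  obtain ⟨ha, hb, hc⟩ := hx
  rw [Ideal.Quotient.eq_zero_iff_mem, Ideal.mem_span_singleton]
  obtain ⟨g, rfl⟩ := dvd_iff_isRoot.mpr ha
  have hgb : g.eval b = 0 := by
    simpa [sub_ne_zero.mpr hab.ne'] using hb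
  obtain ⟨h, rfl⟩ := dvd_iff_isRoot.mpr hgb
  have hhc : h.eval c = 0 := by
    simpa [sub_ne_zero.mpr hbc.ne', sub_ne_zero.mpr (hab.trans hbc).ne'] using hc
  obtain ⟨l, rfl⟩ := dvd_iff_isRoot.mpr hhc
  exact ⟨l, by ring⟩

lemma exists_evalRoots_eq_iff (hqr : IsCoprime (c - b) (c - a)) (u v w : ℤ) :
    (∃ y, evalRoots a b c y = (u, v, w)) ↔ b - a ∣ v - u ∧ c - b ∣ w - v ∧ c - a ∣ w - u := by
  constructor
  · rintro ⟨y, hy⟩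
    obtain ⟨f, rfl⟩ := Ideal.Quotient.mk_surjective y
    rw [evalRoots_mk] at hy
    simp only [Prod.mk.injEq] at hy
    obtain ⟨rfl, rfl, rfl⟩ := hy
    exact ⟨sub_dvd_eval_sub _ _ _, sub_dvd_eval_sub _ _ _, sub_dvd_eval_sub _ _ _⟩
  · rintro ⟨⟨k, hk⟩, ⟨l, hl⟩, ⟨m, hm⟩⟩
    obtain ⟨d, hd⟩ : (c - b) * (c - a) ∣ w - u - k * (c - a) :=
      hqr.mul_dvd ⟨l - k, by linear_combination hl + hk⟩ ⟨m - k, by linear_combination hm⟩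
    refine ⟨Ideal.Quotient.mk _ (C u + C k * (X - C a) + C d * ((X - C a) * (X - C b))), ?_⟩
    rw [evalRoots_mk]
    simp only [eval_add, eval_mul, eval_sub, eval_X, eval_C, Prod.mk.injEq]
    exact ⟨by ring, by linear_combination -hk, by linear_combination -hd⟩

end Evaluation

section FractionRing

open scoped nonZeroDivisors

/-- The total quotient ring of a finite-index subring of `ℤ³` is `ℚ³`. -/
lemma exists_fractionRing_equiv {R : Type*} [CommRing R] (φ : R →+* ℤ × ℤ × ℤ)
    (hφ : Function.Injective φ) (N : ℤ) (hN : N ≠ 0) (h : ∀ t, ∃ y, φ y = N • t) :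
    ∃ e : FractionRing R ≃+* ℚ × ℚ × ℚ, ∀ y : R, e (algebraMap R (FractionRing R) y) =
      (((φ y).1 : ℚ), ((φ y).2.1 : ℚ), ((φ y).2.2 : ℚ)) := by
  let ψ : R →+* ℚ × ℚ × ℚ :=
    ((Int.castRingHom ℚ).prodMap ((Int.castRingHom ℚ).prodMap (Int.castRingHom ℚ))).comp φ
  have hψ : ∀ y, ψ y = (((φ y).1 : ℚ), ((φ y).2.1 : ℚ), ((φ y).2.2 : ℚ)) := fun _ => rfl
  have hψinj : Function.Injective ψ := by
    intro x y hxy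
    rw [hψ, hψ] at hxy
    simp only [Prod.mk.injEq, Int.cast_inj] at hxy
    exact hφ (Prod.ext hxy.1 (Prod.ext hxy.2.1 hxy.2.2))
  have hreg : ∀ y : R, y ∈ R⁰ → ∀ t : ℤ × ℤ × ℤ, φ y * t = 0 → t = 0 := by
    intro y hy t ht
    obtain ⟨z, hz⟩ := h t
    have hyz : z * y = 0 :=
      hφ (by rw [map_mul, hz, mul_comm, mul_smul_comm, ht, smul_zero, map_zero])
    rw [mem_nonZeroDivisors_iff_right.mp hy z hyz, map_zero] at hz
    exact (smul_eq_zero.mp hz.symm).resolve_left hN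
  have hunit : ∀ y : R⁰, IsUnit (ψ y) := by
    rintro ⟨y, hy⟩
    have h1 : (φ y).1 ≠ 0 := fun h0 => by
      simpa using hreg y hy (1, 0, 0) (by simp [Prod.ext_iff, h0])
    have h2 : (φ y).2.1 ≠ 0 := fun h0 => by
      simpa using hreg y hy (0, 1, 0) (by simp [Prod.ext_iff, h0])
    have h3 : (φ y).2.2 ≠ 0 := fun h0 => by
      simpa using hreg y hy (0, 0, 1) (by simp [Prod.ext_iff, h0])
    rw [hψ, Prod.isUnit_iff, Prod.isUnit_iff]
    simp [h1, h2, h3]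
  have hlift : ∀ y, IsLocalization.lift hunit (algebraMap R (FractionRing R) y) = ψ y :=
    fun y => IsLocalization.lift_eq hunit y
  refine ⟨RingEquiv.ofBijective (IsLocalization.lift hunit : FractionRing R →+* ℚ × ℚ × ℚ)
    ⟨?_, ?_⟩, hlift⟩
  · rw [IsLocalization.lift_injective_iff]
    intro x y
    rw [hψinj.eq_iff, (IsFractionRing.injective R (FractionRing R)).eq_iff]
  · rw [IsLocalization.lift_surjective_iff]
    rintro ⟨x, y, z⟩
    have hD : (x.den * y.den * z.den : ℤ) ≠ 0 := by simp
    obtain ⟨s, hs⟩ := h (x.den * y.den * z.den : ℤ)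
    obtain ⟨t, ht⟩ := h (x.num * y.den * z.den, y.num * x.den * z.den, z.num * x.den * y.den)
    refine ⟨⟨t, ⟨s, ?_⟩⟩, ?_⟩
    · refine mem_nonZeroDivisors_of_injective hψinj (IsUnit.mem_nonZeroDivisors ?_)
      rw [hψ, hs, Prod.isUnit_iff, Prod.isUnit_iff]
      simp [hN]
    · simp only [hψ, hs, ht]
      ext
      · simp
        linear_combination (N * y.den * z.den : ℚ) * x.mul_den_eq_num
      · simp
        linear_combination (N * x.den * z.den : ℚ) * y.mul_den_eq_num
      · simp
        linear_combination (N * x.den * y.den : ℚ) * z.mul_den_eq_num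

end FractionRing

/-- For integers `a < b < c` with `c - a ≥ 4` and `gcd(b-a, c-b, c-a) = 1`, and
`R = ℤ[x]/((x-a)(x-b)(x-c))`, the class group `Cl(R)` is isomorphic to the quotient of
`(ℤ/(b-a))ˣ × (ℤ/(c-b))ˣ × (ℤ/(c-a))ˣ` by the subgroup
`{(1,1,1), (1,-1,-1), (-1,1,-1), (-1,-1,1)}` (the subgroup generated by `(1,-1,-1)` and
`(-1,1,-1)`). -/
theorem stmt_18 (a b c : ℤ) (hab : a < b) (hbc : b < c) (h4 : c - a ≥ 4)
    (hgcd : Int.gcd (b - a) (Int.gcd (c - b) (c - a)) = 1) :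
    ∃ H : Subgroup ((ZMod (b - a).toNat)ˣ × (ZMod (c - b).toNat)ˣ × (ZMod (c - a).toNat)ˣ),
      (H : Set ((ZMod (b - a).toNat)ˣ × (ZMod (c - b).toNat)ˣ × (ZMod (c - a).toNat)ˣ)) =
        {(1, 1, 1), (1, -1, -1), (-1, 1, -1), (-1, -1, 1)} ∧
      Nonempty (classGroupOf (ℤ[X] ⧸ Ideal.span {(X - C a) * (X - C b) * (X - C c)}) ≃*
        ((ZMod (b - a).toNat)ˣ × (ZMod (c - b).toNat)ˣ × (ZMod (c - a).toNat)ˣ) ⧸ H) := by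
  obtain ⟨p, hp⟩ : ∃ p : ℕ, b - a = p := Int.eq_ofNat_of_zero_le (by lia)
  obtain ⟨q, hq⟩ : ∃ q : ℕ, c - b = q := Int.eq_ofNat_of_zero_le (by lia)
  obtain ⟨r, hr⟩ : ∃ r : ℕ, c - a = r := Int.eq_ofNat_of_zero_le (by lia)
  have hsum : p + q = r := by lia
  have hpq : p.Coprime q := by
    rw [hp, hq, hr, ← hsum] at hgcd
    simpa [Nat.coprime_comm] using hgcd
  have hqr : q.Coprime r := by
    rw [← hsum]
    simpa using hpq.symm
  rw [hp, hq, hr]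
  simp only [Int.toNat_natCast]
  have hrange := exists_evalRoots_eq_iff (a := a) (b := b) (c := c) (by
    rw [hq, hr]
    exact Nat.isCoprime_iff_coprime.mpr hqr)
  obtain ⟨e, he⟩ := exists_fractionRing_equiv (evalRoots a b c) (evalRoots_injective hab hbc)
    ((b - a) * (c - b) * (c - a)) (by
      have h1 : b - a ≠ 0 := by lia
      have h2 : c - b ≠ 0 := by lia
      have h3 : c - a ≠ 0 := by lia
      positivity) (by
    rintro ⟨u, v, w⟩
    rw [Prod.smul_mk, Prod.smul_mk, hrange]
    simp only [zsmul_eq_mul, Int.cast_id]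
    refine ⟨?_, ?_, ?_⟩
    · exact ⟨(c - b) * (c - a) * (v - u), by ring⟩
    · exact ⟨(b - a) * (c - a) * (w - v), by ring⟩
    · exact ⟨(b - a) * (c - b) * (w - u), by ring⟩)
  refine IsCongruenceOrder.exists_classGroupOf_mulEquiv (e := e) (fun x => ?_) (by lia) (by lia)
    (by lia) hpq hqr
  have hcong : ∀ u v w : ℤ, (∃ y, evalRoots a b c y = (u, v, w)) ↔
      (v : ZMod p) = u ∧ (w : ZMod q) = v ∧ (w : ZMod r) = u := by
    intro u v w
    rw [hrange, hp, hq, hr, ← ZMod.intCast_eq_intCast_iff_dvd_sub,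
      ← ZMod.intCast_eq_intCast_iff_dvd_sub, ← ZMod.intCast_eq_intCast_iff_dvd_sub,
      eq_comm, eq_comm (a := (v : ZMod q)), eq_comm (a := (u : ZMod r))]
  constructor
  · rintro ⟨y, rfl⟩
    refine ⟨_, _, _, he y, ?_⟩
    simpa only [Prod.fst_one, Prod.snd_one, Units.val_one, one_mul] using
      (hcong (evalRoots a b c y).1 (evalRoots a b c y).2.1 (evalRoots a b c y).2.2).mp ⟨y, rfl⟩
  · rintro ⟨u, v, w, hx, h⟩
    obtain ⟨y, hy⟩ := (hcong u v w).mpr (by simpa using h)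
    exact ⟨y, e.injective (by rw [he, hy, hx])⟩
end
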